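/- Let U_s : [0, ∞) → ℝ be C^∞ and suppose there exist a constant U₊ ∈ ℝ and constants C₀, η > 0 such that |U_s(y) − U₊| + |U_s'(y)| + |U_s''(y)| ≤ C₀ e^{−ηy} for all y ≥ 0. Let α > 0 and let c ∈ ℂ with Im c ≠ 0. Then there exist two solutions ψ₊, ψ₋ : [0, ∞) → ℂ of the Rayleigh equation with parameters α, c and profile U_s such that ψ₋(y) e^{αy} → 1 as y → ∞, |ψ₊(y)| ≤ C e^{αy} for some constant C and all y ≥ 0, and the Wronskian ψ₋(y)ψ₊'(y) − ψ₋'(y)ψ₊(y) is identically equal to 1. -/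

import Mathlib

open Set

/-- `ψ` (together with its first and second derivative functions `ψ'`, `ψ''`) is a twice
continuously differentiable solution on `I` of the Rayleigh equation
`(Us y - c) (ψ'' - α² ψ) - Us'' ψ = 0` with parameters `α`, `c` and profile `Us`. -/
def IsRayleighSolutionOn (Us : ℝ → ℝ) (α : ℝ) (c : ℂ)
    (ψ ψ' ψ'' : ℝ → ℂ) (I : Set ℝ) : Prop :=
  (∀ y ∈ I, HasDerivAt ψ (ψ' y) y) ∧
  (∀ y ∈ I, HasDerivAt ψ' (ψ'' y) y) ∧
  ContinuousOn ψ'' I ∧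
  ∀ y ∈ I, ((Us y : ℂ) - c) * (ψ'' y - (α : ℂ)^2 * ψ y)
      - Complex.ofReal (deriv (deriv Us) y) * ψ y = 0

/-! Where `Us ≠ c` the Rayleigh equation is `ψ'' = (α² + q) ψ` with the potential
`q = Us'' / (Us - c)`, integrable on the half-line; the even extension `y ↦ q |y|` moves the
question to the whole line. For `ψ = e^{∓αy} v`, variation of constants turns the equation into a
Volterra equation for `v` with a kernel dominated by `|q| / (2α)`. It has a bounded solution because
the `n`-th iterate of the Volterra operator has norm at most `(∫ |q| / (2α))ⁿ / n!`, so some iterate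
is a contraction. Integrating from `∞` gives `ψ₋`, with `v → 1`; integrating from `0` gives a
solution `O(e^{αy})` with any prescribed data at `0`. Since `ψ₋` does not vanish identically, its
data at `0` are not both zero, so the data of `ψ₊` can be chosen to make the Wronskian, which is
constant, equal to `1`. -/

section Volterra

open MeasureTheory Filter Topology Function BoundedContinuousFunction
open scoped NNReal Nat

theorem hasDerivAt_integral_Ioi {E : Type*} [NormedAddCommGroup E] [NormedSpace ℝ E]
    [CompleteSpace E] {f : ℝ → E} (hf : Continuous f) (hi : ∀ y, IntegrableOn f (Ioi y)) (y : ℝ) :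
    HasDerivAt (fun x => ∫ z in Ioi x, f z) (-f y) y := by
  have h : (fun x => ∫ z in Ioi x, f z) = fun x => (∫ z in Ioi y, f z) - ∫ z in y..x, f z := by
    funext x
    rw [← intervalIntegral.integral_Ioi_sub_Ioi' (hi y) (hi x), sub_sub_cancel]
  rw [h]
  exact (hf.integral_hasStrictDerivAt y y).hasDerivAt.const_sub _

theorem integrable_comp_abs {E : Type*} [NormedAddCommGroup E] {f : ℝ → E}
    (hf : IntegrableOn f (Ioi 0)) : Integrable fun y => f |y| := by
  have hpos : IntegrableOn (fun y => f |y|) (Ioi 0) :=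
    hf.congr_fun (fun y hy => by rw [abs_of_pos hy]) measurableSet_Ioi
  have hnonneg : IntegrableOn (fun y => f |y|) (Ici (-0)) := by
    rwa [neg_zero, integrableOn_Ici_iff_integrableOn_Ioi]
  have hneg : IntegrableOn (fun y => f |y|) (Iic 0) := by
    simpa only [abs_neg] using hnonneg.comp_neg_Iic
  rw [← integrableOn_univ, ← Iic_union_Ioi (a := (0 : ℝ))]
  exact hneg.union hpos

theorem integral_Ioi_mul_pow_integral_Ioi {ρ : ℝ → ℝ} (hρ : Continuous ρ) (hi : Integrable ρ)
    (n : ℕ) (y : ℝ) :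
    IntegrableOn (fun z => ρ z * (∫ t in Ioi z, ρ t) ^ n) (Ioi y) ∧
      ∫ z in Ioi y, ρ z * (∫ t in Ioi z, ρ t) ^ n = (∫ t in Ioi y, ρ t) ^ (n + 1) / (n + 1) := by
  have hG (x : ℝ) : HasDerivAt (fun z => ∫ t in Ioi z, ρ t) (-ρ x) x :=
    hasDerivAt_integral_Ioi hρ (fun _ => hi.integrableOn) x
  have hGc : Continuous fun z => ∫ t in Ioi z, ρ t :=
    continuous_iff_continuousAt.2 fun x => (hG x).continuousAt
  have hF (x : ℝ) : HasDerivAt (fun z => -((∫ t in Ioi z, ρ t) ^ (n + 1) / (n + 1)))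
      (ρ x * (∫ t in Ioi x, ρ t) ^ n) x := by
    refine (((hG x).pow (n + 1)).div_const ((n : ℝ) + 1)).neg.congr_deriv ?_
    push_cast
    field_simp
  have hlim : Tendsto (fun z => -((∫ t in Ioi z, ρ t) ^ (n + 1) / (n + 1))) atTop (𝓝 0) := by
    simpa using (((tendsto_integral_Ioi_zero tendsto_id).pow (n + 1)).div_const ((n : ℝ) + 1)).neg
  have hbound (z : ℝ) : ‖(∫ t in Ioi z, ρ t) ^ n‖ ≤ (∫ t, ‖ρ t‖) ^ n := by
    rw [norm_pow]
    gcongr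
    exact (norm_integral_le_integral_norm _).trans
      (setIntegral_le_integral hi.norm (.of_forall fun _ => norm_nonneg _))
  have hint : IntegrableOn (fun z => ρ z * (∫ t in Ioi z, ρ t) ^ n) (Ioi y) :=
    (hi.mul_bdd (hGc.pow n).aestronglyMeasurable (.of_forall hbound)).integrableOn
  refine ⟨hint, ?_⟩
  rw [integral_Ioi_of_hasDerivAt_of_tendsto' (fun x _ => hF x) hint hlim]
  ring

theorem dist_iterate_le_of_dist_le_integral {E : Type*} [PseudoMetricSpace E] {ρ : ℝ → ℝ}
    (hρ : Continuous ρ) (hi : Integrable ρ) (hρ0 : ∀ z, 0 ≤ ρ z) {Φ : (ℝ →ᵇ E) → ℝ →ᵇ E}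
    (hΦ : ∀ v w y, dist (Φ v y) (Φ w y) ≤ ∫ z in Ioi y, ρ z * dist (v z) (w z))
    (n : ℕ) (v w : ℝ →ᵇ E) (y : ℝ) :
    dist (Φ^[n] v y) (Φ^[n] w y) ≤ (∫ z in Ioi y, ρ z) ^ n / n ! * dist v w := by
  induction n generalizing y with
  | zero => simpa using dist_coe_le_dist y
  | succ n ih =>
    obtain ⟨hint, hval⟩ := integral_Ioi_mul_pow_integral_Ioi hρ hi n y
    simp only [iterate_succ_apply']
    calc dist (Φ (Φ^[n] v) y) (Φ (Φ^[n] w) y)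
        ≤ ∫ z in Ioi y, ρ z * dist (Φ^[n] v z) (Φ^[n] w z) := hΦ _ _ y
      _ ≤ ∫ z in Ioi y, ρ z * (∫ t in Ioi z, ρ t) ^ n * (dist v w / n !) := by
          refine integral_mono_of_nonneg (.of_forall fun z => mul_nonneg (hρ0 z) dist_nonneg)
            (hint.mul_const _) (.of_forall fun z => ?_)
          calc ρ z * dist (Φ^[n] v z) (Φ^[n] w z)
              ≤ ρ z * ((∫ t in Ioi z, ρ t) ^ n / n ! * dist v w) :=
                mul_le_mul_of_nonneg_left (ih z) (hρ0 z)
            _ = ρ z * (∫ t in Ioi z, ρ t) ^ n * (dist v w / n !) := by ring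
      _ = (∫ z in Ioi y, ρ z) ^ (n + 1) / (n + 1) ! * dist v w := by
          rw [integral_mul_const, hval, Nat.factorial_succ]
          push_cast
          field_simp

theorem exists_isFixedPt_of_dist_le_integral {E : Type*} [MetricSpace E] [CompleteSpace E]
    [Nonempty E] {ρ : ℝ → ℝ} (hρ : Continuous ρ) (hi : Integrable ρ) (hρ0 : ∀ z, 0 ≤ ρ z)
    {Φ : (ℝ →ᵇ E) → ℝ →ᵇ E}
    (hΦ : ∀ v w y, dist (Φ v y) (Φ w y) ≤ ∫ z in Ioi y, ρ z * dist (v z) (w z)) :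
    ∃ v, IsFixedPt Φ v := by
  set R : ℝ≥0 := ⟨∫ z, ρ z, integral_nonneg hρ0⟩
  obtain ⟨n, hn⟩ : ∃ n : ℕ, (R : ℝ) ^ n / n ! < 1 :=
    ((FloorSemiring.tendsto_pow_div_factorial_atTop (R : ℝ)).eventually_lt_const one_pos).exists
  have hcontr : ContractingWith (R ^ n / (n ! : ℝ≥0)) Φ^[n] := by
    refine ⟨mod_cast hn, LipschitzWith.of_dist_le_mul fun v w => ?_⟩
    refine (dist_le (by positivity)).2 fun y => ?_
    refine (dist_iterate_le_of_dist_le_integral hρ hi hρ0 hΦ n v w y).trans ?_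
    push_cast
    gcongr
    · exact setIntegral_nonneg measurableSet_Ioi fun z _ => hρ0 z
    · exact setIntegral_le_integral hi (.of_forall hρ0)
  have : Nonempty (ℝ →ᵇ E) := ⟨.const ℝ (Classical.arbitrary E)⟩
  exact ⟨_, hcontr.isFixedPt_fixedPoint_iterate⟩

/-- `K` is the kernel of a Volterra operator `v ↦ ∫ z in (y, ∞), K y z * v z` on the line,
dominated by the density `ρ` uniformly in its first variable. -/
structure IsVolterraKernel {A : Type*} [NormedRing A] (K : ℝ → ℝ → A) (ρ : ℝ → ℝ) : Prop where
  continuous_left (z : ℝ) : Continuous fun y => K y z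
  aestronglyMeasurable (y : ℝ) : AEStronglyMeasurable (K y)
  norm_le (y z : ℝ) : ‖K y z‖ ≤ ρ z
  eq_zero {y z : ℝ} (h : z ≤ y) : K y z = 0

namespace IsVolterraKernel

variable {A : Type*} [NormedRing A] {K : ℝ → ℝ → A} {ρ : ℝ → ℝ}

theorem nonneg (hK : IsVolterraKernel K ρ) (z : ℝ) : 0 ≤ ρ z :=
  (norm_nonneg _).trans (hK.norm_le 0 z)

theorem norm_mul_le (hK : IsVolterraKernel K ρ) (v : ℝ →ᵇ A) (y z : ℝ) :
    ‖K y z * v z‖ ≤ ρ z * ‖v‖ :=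
  norm_mul_le_of_le (hK.norm_le y z) (v.norm_coe_le_norm z)

theorem integrable_mul (hK : IsVolterraKernel K ρ) (hi : Integrable ρ) (v : ℝ →ᵇ A) (y : ℝ) :
    Integrable fun z => K y z * v z :=
  (hi.mul_const ‖v‖).mono'
    ((hK.aestronglyMeasurable y).mul v.continuous.aestronglyMeasurable)
    (.of_forall (hK.norm_mul_le v y))

variable [NormedAlgebra ℝ A]

theorem continuous_integral (hK : IsVolterraKernel K ρ) (hi : Integrable ρ) (v : ℝ →ᵇ A) :
    Continuous fun y => ∫ z, K y z * v z :=
  continuous_of_dominated (fun y => (hK.integrable_mul hi v y).aestronglyMeasurable)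
    (fun y => .of_forall (hK.norm_mul_le v y)) (hi.mul_const _)
    (.of_forall fun z => (hK.continuous_left z).mul continuous_const)

theorem norm_integral_le (hK : IsVolterraKernel K ρ) (hi : Integrable ρ) (v : ℝ →ᵇ A) (y : ℝ) :
    ‖∫ z, K y z * v z‖ ≤ ∫ z in Ioi y, ρ z * ‖v z‖ := by
  have hsupp : ∫ z in Ioi y, K y z * v z = ∫ z, K y z * v z :=
    setIntegral_eq_integral_of_forall_compl_eq_zero fun z hz => by
      rw [hK.eq_zero (not_lt.1 hz), zero_mul]
  rw [← hsupp]
  refine norm_integral_le_of_norm_le ?_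
    (.of_forall fun z => norm_mul_le_of_le (hK.norm_le y z) le_rfl)
  exact (hi.mul_bdd v.continuous.norm.aestronglyMeasurable
    (.of_forall fun z => by simpa using v.norm_coe_le_norm z)).integrableOn

theorem tendsto_integral_atTop (hK : IsVolterraKernel K ρ) (hi : Integrable ρ) (v : ℝ →ᵇ A) :
    Tendsto (fun y => ∫ z, K y z * v z) atTop (𝓝 0) := by
  rw [← integral_zero ℝ A]
  refine tendsto_integral_filter_of_dominated_convergence (fun z => ρ z * ‖v‖)
    (.of_forall fun y => (hK.integrable_mul hi v y).aestronglyMeasurable)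
    (.of_forall fun y => .of_forall (hK.norm_mul_le v y)) (hi.mul_const _)
    (.of_forall fun z => tendsto_const_nhds.congr' ?_)
  filter_upwards [eventually_ge_atTop z] with y hy
  rw [hK.eq_zero hy, zero_mul]

theorem exists_eq_add_integral [CompleteSpace A] (hK : IsVolterraKernel K ρ) (hρ : Continuous ρ)
    (hi : Integrable ρ) (f : ℝ →ᵇ A) : ∃ v : ℝ →ᵇ A, ∀ y, v y = f y + ∫ z, K y z * v z := by
  have hbound (v : ℝ →ᵇ A) (y : ℝ) : ‖∫ z, K y z * v z‖ ≤ ∫ z, ρ z * ‖v‖ :=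
    norm_integral_le_of_norm_le (hi.mul_const _) (.of_forall (hK.norm_mul_le v y))
  let T (v : ℝ →ᵇ A) : ℝ →ᵇ A := .ofNormedAddCommGroup (fun y => ∫ z, K y z * v z)
    (hK.continuous_integral hi v) _ (hbound v)
  have hT (v w : ℝ →ᵇ A) : T v - T w = T (v - w) := by
    ext y
    exact (integral_sub (hK.integrable_mul hi v y) (hK.integrable_mul hi w y)).symm.trans
      (by simp only [← mul_sub]; rfl)
  obtain ⟨v, hv⟩ : ∃ v, IsFixedPt (fun v => f + T v) v := by
    refine exists_isFixedPt_of_dist_le_integral hρ hi hK.nonneg fun v w y => ?_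
    simp only [dist_eq_norm, ← BoundedContinuousFunction.sub_apply]
    rw [add_sub_add_left_eq_sub, hT]
    exact hK.norm_integral_le hi (v - w) y
  exact ⟨v, fun y => (DFunLike.congr_fun hv y).symm⟩

end IsVolterraKernel

end Volterra

/-- The pair `(ψ, ψ')` is a function with its derivative, and solves `ψ'' = Q ψ` on `I`. -/
structure IsSchrodingerSolutionOn (Q ψ ψ' : ℝ → ℂ) (I : Set ℝ) : Prop where
  hasDerivAt {y : ℝ} (hy : y ∈ I) : HasDerivAt ψ (ψ' y) y
  hasDerivAt_deriv {y : ℝ} (hy : y ∈ I) : HasDerivAt ψ' (Q y * ψ y) y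

namespace IsSchrodingerSolutionOn

variable {Q ψ ψ' χ χ' χ₁ χ₁' χ₂ χ₂' : ℝ → ℂ} {I : Set ℝ}

theorem wronskian_eq (hI : Convex ℝ I) (hψ : IsSchrodingerSolutionOn Q ψ ψ' I)
    (hχ : IsSchrodingerSolutionOn Q χ χ' I) {x y : ℝ} (hx : x ∈ I) (hy : y ∈ I) :
    ψ y * χ' y - ψ' y * χ y = ψ x * χ' x - ψ' x * χ x := by
  have hd : ∀ z ∈ I, HasDerivWithinAt (fun z => ψ z * χ' z - ψ' z * χ z) 0 I z := fun z hz =>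
    (((hψ.hasDerivAt hz).mul (hχ.hasDerivAt_deriv hz)).sub
      ((hψ.hasDerivAt_deriv hz).mul (hχ.hasDerivAt hz))).hasDerivWithinAt.congr_deriv (by ring)
  have hle := hI.norm_image_sub_le_of_norm_hasDerivWithin_le hd (fun _ _ => norm_zero.le) hx hy
  rwa [zero_mul, norm_le_zero_iff, sub_eq_zero] at hle

-- Expanding `ψ` in `χ₁, χ₂` by Cramer's rule: all the coefficients are constant Wronskians.
theorem eq_zero_of_initial_eq_zero (hI : Convex ℝ I) (hψ : IsSchrodingerSolutionOn Q ψ ψ' I)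
    (hχ₁ : IsSchrodingerSolutionOn Q χ₁ χ₁' I) (hχ₂ : IsSchrodingerSolutionOn Q χ₂ χ₂' I)
    {x : ℝ} (hx : x ∈ I) (hχ : χ₁ x * χ₂' x - χ₁' x * χ₂ x ≠ 0) (h0 : ψ x = 0) (h0' : ψ' x = 0)
    {y : ℝ} (hy : y ∈ I) : ψ y = 0 := by
  have hw₁ := hψ.wronskian_eq hI hχ₁ hx hy
  have hw₂ := hψ.wronskian_eq hI hχ₂ hx hy
  have hw := hχ₁.wronskian_eq hI hχ₂ hx hy
  rw [h0, h0', zero_mul, zero_mul, sub_zero] at hw₁ hw₂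
  refine (mul_eq_zero.1 ?_).resolve_right hχ
  linear_combination χ₁ y * hw₂ - χ₂ y * hw₁ - ψ y * hw

end IsSchrodingerSolutionOn

section Duhamel

open MeasureTheory Filter Topology BoundedContinuousFunction

/-- The variation of constants ansatz for `ψ'' = β² ψ + h`: the coefficients of `e^{βy}` and
`e^{-βy}` in `2β ψ` are made to depend on `y`. -/
noncomputable def duhamel (β : ℂ) (A B : ℝ → ℂ) (y : ℝ) : ℂ :=
  (Complex.exp (β * y) * A y - Complex.exp (-(β * y)) * B y) / (2 * β)

/-- The derivative of `duhamel β A B` under the condition `e^{βy} A' = e^{-βy} B'`. -/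
noncomputable def duhamelDeriv (β : ℂ) (A B : ℝ → ℂ) (y : ℝ) : ℂ :=
  (Complex.exp (β * y) * A y + Complex.exp (-(β * y)) * B y) / 2

variable {β : ℂ} {q v A B : ℝ → ℂ} {I : Set ℝ}

theorem hasDerivAt_cexp_const_mul (β : ℂ) (y : ℝ) :
    HasDerivAt (fun x : ℝ => Complex.exp (β * x)) (β * Complex.exp (β * y)) y := by
  simpa [mul_comm] using (((hasDerivAt_id y).ofReal_comp).const_mul β).cexp

theorem duhamel_eq_cexp_mul (β : ℂ) (A B : ℝ → ℂ) (y : ℝ) :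
    duhamel β A B y =
      Complex.exp (β * y) * ((A y - Complex.exp (-(2 * β * y)) * B y) / (2 * β)) := by
  have hexp : Complex.exp (-(β * y)) = Complex.exp (β * y) * Complex.exp (-(2 * β * y)) := by
    rw [← Complex.exp_add]
    ring_nf
  rw [duhamel, hexp]
  ring

theorem isSchrodingerSolutionOn_duhamel (hβ : β ≠ 0)
    (hA : ∀ y ∈ I, HasDerivAt A (q y * v y) y)
    (hB : ∀ y ∈ I, HasDerivAt B (Complex.exp (2 * β * y) * (q y * v y)) y)
    (hv : ∀ y ∈ I, v y = (A y - Complex.exp (-(2 * β * y)) * B y) / (2 * β)) :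
    IsSchrodingerSolutionOn (fun y => β ^ 2 + q y) (duhamel β A B) (duhamelDeriv β A B) I := by
  have hneg (y : ℝ) : HasDerivAt (fun x : ℝ => Complex.exp (-(β * x)))
      (-β * Complex.exp (-(β * y))) y := by
    simpa only [neg_mul] using hasDerivAt_cexp_const_mul (-β) y
  have hexp (y : ℝ) :
      Complex.exp (-(β * y)) * Complex.exp (2 * β * y) = Complex.exp (β * y) := by
    rw [← Complex.exp_add]
    ring_nf
  refine ⟨fun {y} hy => ?_, fun {y} hy => ?_⟩
  · refine ((((hasDerivAt_cexp_const_mul β y).mul (hA y hy)).sub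
      ((hneg y).mul (hB y hy))).div_const (2 * β)).congr_deriv ?_
    rw [duhamelDeriv, ← mul_assoc (Complex.exp _) (Complex.exp _), hexp]
    field_simp
    ring
  · refine ((((hasDerivAt_cexp_const_mul β y).mul (hA y hy)).add
      ((hneg y).mul (hB y hy))).div_const 2).congr_deriv ?_
    have hψ : duhamel β A B y = Complex.exp (β * y) * v y := by
      rw [duhamel_eq_cexp_mul, hv y hy]
    have hAB : Complex.exp (β * y) * A y - Complex.exp (-(β * y)) * B y =
        2 * β * duhamel β A B y := by
      rw [duhamel, mul_div_cancel₀ _ (mul_ne_zero two_ne_zero hβ)]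
    rw [← mul_assoc (Complex.exp _) (Complex.exp _), hexp]
    linear_combination β / 2 * hAB - q y * hψ

theorem setIntegral_duhamel {g : ℝ → ℂ} {s : Set ℝ} (y : ℝ) (hg : IntegrableOn g s)
    (hg' : IntegrableOn (fun z : ℝ => Complex.exp (2 * β * z) * g z) s) :
    ∫ z in s, (1 - Complex.exp (-(2 * β * (y - z : ℝ)))) / (2 * β) * g z =
      ((∫ z in s, g z) - Complex.exp (-(2 * β * y)) *
        ∫ z in s, Complex.exp (2 * β * z) * g z) / (2 * β) := by
  rw [← integral_const_mul, ← integral_sub hg (hg'.const_mul _), ← integral_div]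
  congr with z
  have hexp : Complex.exp (-(2 * β * (y - z : ℝ))) =
      Complex.exp (-(2 * β * y)) * Complex.exp (2 * β * z) := by
    rw [← Complex.exp_add]
    push_cast
    ring_nf
  rw [hexp]
  ring

/-- The Green function of `w'' + 2α w'` supported on the positive half-line, written so that it
vanishes on the negative one. -/
noncomputable def dampedGreen (α s : ℝ) : ℝ :=
  (1 - Real.exp (-(2 * α * max s 0))) / (2 * α)

variable {α : ℝ}

theorem continuous_dampedGreen (α : ℝ) : Continuous (dampedGreen α) := by
  unfold dampedGreen
  fun_prop

theorem dampedGreen_of_nonpos {s : ℝ} (hs : s ≤ 0) : dampedGreen α s = 0 := by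
  simp [dampedGreen, max_eq_right hs]

theorem ofReal_dampedGreen_of_nonneg {s : ℝ} (hs : 0 ≤ s) :
    (dampedGreen α s : ℂ) = (1 - Complex.exp (-(2 * α * s))) / (2 * α) := by
  simp [dampedGreen, max_eq_left hs]

theorem norm_ofReal_dampedGreen_le (hα : 0 < α) (s : ℝ) :
    ‖(dampedGreen α s : ℂ)‖ ≤ 1 / (2 * α) := by
  have hnn : 0 ≤ 2 * α * max s 0 := mul_nonneg (by positivity) (le_max_right s 0)
  have hexp : Real.exp (-(2 * α * max s 0)) ≤ 1 := Real.exp_le_one_iff.2 (neg_nonpos.2 hnn)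
  have hpos := Real.exp_pos (-(2 * α * max s 0))
  rw [Complex.norm_real, Real.norm_eq_abs, dampedGreen, abs_div,
    abs_of_pos (by positivity : 0 < 2 * α)]
  gcongr
  rw [abs_le]
  constructor <;> linarith

theorem isVolterraKernel_dampedGreen_mul (hα : 0 < α) {p : ℝ → ℂ} {r : ℝ → ℝ}
    (hp : AEStronglyMeasurable p) (hpr : ∀ z, ‖p z‖ ≤ r z) :
    IsVolterraKernel (fun y z => (dampedGreen α (z - y) : ℂ) * p z)
      (fun z => 1 / (2 * α) * r z) where
  continuous_left z := by
    have := continuous_dampedGreen α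
    fun_prop
  aestronglyMeasurable y := by
    have := continuous_dampedGreen α
    exact (Continuous.aestronglyMeasurable (by fun_prop)).mul hp
  norm_le y z := norm_mul_le_of_le (norm_ofReal_dampedGreen_le hα _) (hpr z)
  eq_zero h := by simp [dampedGreen_of_nonpos (sub_nonpos.2 h)]

theorem integral_Ioi_dampedGreen_mul_mul (α : ℝ) (p v : ℝ → ℂ) (y : ℝ) :
    ∫ z in Ioi y, (dampedGreen α (z - y) : ℂ) * (p z * v z) =
      ∫ z, (dampedGreen α (z - y) : ℂ) * p z * v z := by
  simp only [mul_assoc]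
  refine setIntegral_eq_integral_of_forall_compl_eq_zero fun z hz => ?_
  rw [dampedGreen_of_nonpos (sub_nonpos.2 (not_lt.1 hz)), Complex.ofReal_zero, zero_mul]

theorem exists_eq_add_integral_Ioi_dampedGreen (hα : 0 < α) {p : ℝ → ℂ} {r : ℝ → ℝ}
    (hp : AEStronglyMeasurable p) (hpr : ∀ z, ‖p z‖ ≤ r z) (hr : Continuous r)
    (hi : Integrable r) (f : ℝ →ᵇ ℂ) :
    ∃ v : ℝ →ᵇ ℂ, ∀ y, v y = f y + ∫ z in Ioi y, (dampedGreen α (z - y) : ℂ) * (p z * v z) := by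
  simp only [integral_Ioi_dampedGreen_mul_mul]
  exact (isVolterraKernel_dampedGreen_mul hα hp hpr).exists_eq_add_integral
    (continuous_const.mul hr) (hi.const_mul _) f

theorem tendsto_integral_Ioi_dampedGreen (hα : 0 < α) (hi : Integrable q) (v : ℝ →ᵇ ℂ) :
    Tendsto (fun y => ∫ z in Ioi y, (dampedGreen α (z - y) : ℂ) * (q z * v z)) atTop (𝓝 0) := by
  simp only [integral_Ioi_dampedGreen_mul_mul]
  exact (isVolterraKernel_dampedGreen_mul hα hi.aestronglyMeasurable
    fun _ => le_rfl).tendsto_integral_atTop (hi.norm.const_mul _) v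

-- The reflection `z ↦ -z` turns the forward equation into the backward one.
theorem exists_eq_add_integral_Ioc_dampedGreen (hα : 0 < α) (hq : Continuous q)
    (hi : Integrable q) (f : ℝ →ᵇ ℂ) :
    ∃ v : ℝ →ᵇ ℂ, ∀ y,
      v y = f y + ∫ z in Ioc 0 y, (dampedGreen α (y - z) : ℂ) * (q z * v z) := by
  let neg : C(ℝ, ℝ) := ⟨Neg.neg, continuous_neg⟩
  have hp : AEStronglyMeasurable fun z => (Ioi 0).indicator q (-z) :=
    ((hq.measurable.indicator measurableSet_Ioi).comp measurable_neg).aestronglyMeasurable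
  obtain ⟨w, hw⟩ := exists_eq_add_integral_Ioi_dampedGreen hα hp
    (fun z => norm_indicator_le_norm_self q (-z)) (hq.norm.comp continuous_neg) hi.norm.comp_neg
    (f.compContinuous neg)
  refine ⟨w.compContinuous neg, fun y => ?_⟩
  have hind (z : ℝ) : (dampedGreen α (y - z) : ℂ) * ((Ioi 0).indicator q z * w (-z)) =
      (Ioi 0).indicator (fun z => (dampedGreen α (y - z) : ℂ) * (q z * w (-z))) z := by
    by_cases hz : z ∈ Ioi (0 : ℝ) <;> simp [hz]
  calc w (-y)
      = f (- -y) + ∫ z in Ioi (-y),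
          (dampedGreen α (z - -y) : ℂ) * ((Ioi 0).indicator q (-z) * w z) := hw (-y)
    _ = f y + ∫ z in Ioi (-y),
          (dampedGreen α (y - -z) : ℂ) * ((Ioi 0).indicator q (-z) * w (- -z)) := by
        simp only [neg_neg, sub_neg_eq_add, add_comm]
    _ = f y + ∫ z in Iic y, (dampedGreen α (y - z) : ℂ) * ((Ioi 0).indicator q z * w (-z)) := by
        rw [integral_comp_neg_Ioi (-y) fun z =>
          (dampedGreen α (y - z) : ℂ) * ((Ioi 0).indicator q z * w (-z)), neg_neg]
    _ = f y + ∫ z in Ioc 0 y, (dampedGreen α (y - z) : ℂ) * (q z * w (-z)) := by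
        simp only [hind]
        rw [setIntegral_indicator measurableSet_Ioi, Iic_inter_Ioi]

theorem integrableOn_Ioi_cexp_mul (hα : 0 ≤ α) {g : ℝ → ℂ} {y : ℝ} (hg : IntegrableOn g (Ioi y)) :
    IntegrableOn (fun z : ℝ => Complex.exp (2 * -α * z) * g z) (Ioi y) := by
  refine hg.bdd_mul (c := Real.exp (2 * -α * y))
    (Continuous.aestronglyMeasurable (by fun_prop)) ?_
  refine (ae_restrict_iff' measurableSet_Ioi).2 (.of_forall fun z hz => ?_)
  have hre : (2 * -α * z : ℂ).re = 2 * -α * z := by norm_cast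
  rw [Complex.norm_exp, hre, Real.exp_le_exp]
  exact mul_le_mul_of_nonpos_left (le_of_lt hz) (by linarith)

theorem integral_Ioi_dampedGreen_mul (hα : 0 ≤ α) {g : ℝ → ℂ} {y : ℝ}
    (hg : IntegrableOn g (Ioi y)) :
    ∫ z in Ioi y, (dampedGreen α (z - y) : ℂ) * g z =
      -(((∫ z in Ioi y, g z) - Complex.exp (-(2 * -α * y)) *
        ∫ z in Ioi y, Complex.exp (2 * -α * z) * g z) / (2 * -α)) := by
  rw [← setIntegral_duhamel y hg (integrableOn_Ioi_cexp_mul hα hg), ← integral_neg]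
  refine setIntegral_congr_fun measurableSet_Ioi fun z hz => ?_
  simp only [ofReal_dampedGreen_of_nonneg (sub_nonneg.2 (le_of_lt hz))]
  push_cast
  ring_nf

theorem integral_Ioc_dampedGreen_mul {g : ℝ → ℂ} (hg : Continuous g) (x y : ℝ) :
    ∫ z in Ioc x y, (dampedGreen α (y - z) : ℂ) * g z =
      ((∫ z in Ioc x y, g z) - Complex.exp (-(2 * α * y)) *
        ∫ z in Ioc x y, Complex.exp (2 * α * z) * g z) / (2 * α) := by
  rw [← setIntegral_duhamel y hg.integrableOn_Ioc
    (Continuous.integrableOn_Ioc (by fun_prop))]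
  refine setIntegral_congr_fun measurableSet_Ioc fun z hz => ?_
  simp only [ofReal_dampedGreen_of_nonneg (sub_nonneg.2 hz.2)]

theorem exists_isSchrodingerSolutionOn_tendsto_one (hα : 0 < α) (hq : Continuous q)
    (hi : Integrable q) :
    ∃ ψ ψ' : ℝ → ℂ, IsSchrodingerSolutionOn (fun y => (α : ℂ) ^ 2 + q y) ψ ψ' univ ∧
      Tendsto (fun y : ℝ => ψ y * Complex.exp (α * y)) atTop (𝓝 1) := by
  obtain ⟨v, hv⟩ := exists_eq_add_integral_Ioi_dampedGreen hα hi.aestronglyMeasurable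
    (fun _ => le_rfl) hq.norm hi.norm (.const ℝ 1)
  have hlim : Tendsto v atTop (𝓝 1) := by
    rw [funext hv]
    simpa using (tendsto_integral_Ioi_dampedGreen hα hi v).const_add 1
  have hgc : Continuous fun z => q z * v z := hq.mul v.continuous
  have hg : Integrable fun z => q z * v z :=
    hi.mul_bdd v.continuous.aestronglyMeasurable (.of_forall v.norm_coe_le_norm)
  have hα0 : (α : ℂ) ≠ 0 := Complex.ofReal_ne_zero.2 hα.ne'
  let A : ℝ → ℂ := fun y => 2 * -α - ∫ z in Ioi y, q z * v z
  let B : ℝ → ℂ := fun y => -∫ z in Ioi y, Complex.exp (2 * -α * z) * (q z * v z)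
  have hA (y : ℝ) : HasDerivAt A (q y * v y) y :=
    ((hasDerivAt_integral_Ioi hgc (fun _ => hg.integrableOn) y).const_sub _).congr_deriv
      (neg_neg _)
  have hB (y : ℝ) : HasDerivAt B (Complex.exp (2 * -α * y) * (q y * v y)) y :=
    (hasDerivAt_integral_Ioi (by fun_prop)
      (fun _ => integrableOn_Ioi_cexp_mul hα.le hg.integrableOn) y).fun_neg.congr_deriv (neg_neg _)
  have hvAB (y : ℝ) : v y = (A y - Complex.exp (-(2 * -α * y)) * B y) / (2 * -α) := by
    rw [hv y, integral_Ioi_dampedGreen_mul hα.le hg.integrableOn, const_apply]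
    simp only [A, B]
    field_simp
    ring
  refine ⟨duhamel (-α) A B, duhamelDeriv (-α) A B, ?_, hlim.congr fun y => ?_⟩
  · rw [← neg_sq]
    exact isSchrodingerSolutionOn_duhamel (neg_ne_zero.2 hα0) (fun y _ => hA y) (fun y _ => hB y)
      fun y _ => hvAB y
  · rw [duhamel_eq_cexp_mul, ← hvAB, mul_right_comm, ← Complex.exp_add, neg_mul, neg_add_cancel,
      Complex.exp_zero, one_mul]

theorem exists_isSchrodingerSolutionOn_norm_le_exp (hα : 0 < α) (hq : Continuous q)
    (hi : Integrable q) (a b : ℂ) :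
    ∃ ψ ψ' : ℝ → ℂ, IsSchrodingerSolutionOn (fun y => (α : ℂ) ^ 2 + q y) ψ ψ' (Ici 0) ∧
      ψ 0 = a ∧ ψ' 0 = b ∧ ∃ C : ℝ, ∀ y ≥ (0 : ℝ), ‖ψ y‖ ≤ C * Real.exp (α * y) := by
  have hα0 : (α : ℂ) ≠ 0 := Complex.ofReal_ne_zero.2 hα.ne'
  have hGc := continuous_dampedGreen α
  have hfree (y : ℝ) : ‖a + (b - α * a) * (dampedGreen α y : ℂ)‖ ≤
      ‖a‖ + ‖b - α * a‖ * (1 / (2 * α)) :=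
    norm_add_le_of_le le_rfl (norm_mul_le_of_le le_rfl (norm_ofReal_dampedGreen_le hα y))
  obtain ⟨v, hv⟩ := exists_eq_add_integral_Ioc_dampedGreen hα hq hi
    (.ofNormedAddCommGroup _ (by fun_prop) _ hfree)
  have hgc : Continuous fun z => q z * v z := hq.mul v.continuous
  have hgc' : Continuous fun z : ℝ => Complex.exp (2 * α * z) * (q z * v z) := by fun_prop
  let A : ℝ → ℂ := fun y => α * a + b + ∫ z in 0..y, q z * v z
  let B : ℝ → ℂ := fun y => b - α * a + ∫ z in 0..y, Complex.exp (2 * α * z) * (q z * v z)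
  have hA (y : ℝ) : HasDerivAt A (q y * v y) y :=
    (hgc.integral_hasStrictDerivAt 0 y).hasDerivAt.const_add _
  have hB (y : ℝ) : HasDerivAt B (Complex.exp (2 * α * y) * (q y * v y)) y :=
    (hgc'.integral_hasStrictDerivAt 0 y).hasDerivAt.const_add _
  have hvAB (y : ℝ) (hy : 0 ≤ y) :
      v y = (A y - Complex.exp (-(2 * α * y)) * B y) / (2 * α) := by
    rw [hv y, integral_Ioc_dampedGreen_mul hgc, coe_ofNormedAddCommGroup,
      ofReal_dampedGreen_of_nonneg hy]
    simp only [A, B, intervalIntegral.integral_of_le hy]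
    field_simp
    ring
  have hA0 : A 0 = α * a + b := by simp [A]
  have hB0 : B 0 = b - α * a := by simp [B]
  refine ⟨duhamel α A B, duhamelDeriv α A B, isSchrodingerSolutionOn_duhamel hα0
    (fun y _ => hA y) (fun y _ => hB y) hvAB, ?_, ?_, ‖v‖, fun y hy => ?_⟩
  · rw [duhamel, hA0, hB0, Complex.ofReal_zero, mul_zero, neg_zero, Complex.exp_zero]
    field_simp
    ring
  · rw [duhamelDeriv, hA0, hB0, Complex.ofReal_zero, mul_zero, neg_zero, Complex.exp_zero]
    ring
  · rw [duhamel_eq_cexp_mul, ← hvAB y hy, mul_comm]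
    refine norm_mul_le_of_le (v.norm_coe_le_norm y) ?_
    simp [Complex.norm_exp]

theorem exists_isSchrodingerSolutionOn_wronskian_eq_one (hα : 0 < α) (hq : Continuous q)
    (hi : Integrable q) :
    ∃ ψp ψp' ψm ψm' : ℝ → ℂ,
      IsSchrodingerSolutionOn (fun y => (α : ℂ) ^ 2 + q y) ψp ψp' (Ici 0) ∧
      IsSchrodingerSolutionOn (fun y => (α : ℂ) ^ 2 + q y) ψm ψm' (Ici 0) ∧
      Tendsto (fun y : ℝ => ψm y * Complex.exp (α * y)) atTop (𝓝 1) ∧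
      (∃ C : ℝ, ∀ y ≥ (0 : ℝ), ‖ψp y‖ ≤ C * Real.exp (α * y)) ∧
      ∀ y ≥ (0 : ℝ), ψm y * ψp' y - ψm' y * ψp y = 1 := by
  obtain ⟨ψm, ψm', hm, hlim⟩ := exists_isSchrodingerSolutionOn_tendsto_one hα hq hi
  replace hm : IsSchrodingerSolutionOn _ ψm ψm' (Ici 0) :=
    ⟨fun _ => hm.hasDerivAt trivial, fun _ => hm.hasDerivAt_deriv trivial⟩
  have hivp := exists_isSchrodingerSolutionOn_norm_le_exp hα hq hi
  have hne : ψm 0 = 0 → ψm' 0 ≠ 0 := fun h0 h0' => by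
    obtain ⟨χ₁, χ₁', h₁, h₁0, h₁0', -⟩ := hivp 1 0
    obtain ⟨χ₂, χ₂', h₂, h₂0, h₂0', -⟩ := hivp 0 1
    have hzero : ∀ᶠ y : ℝ in atTop, (0 : ℂ) = ψm y * Complex.exp (α * y) := by
      filter_upwards [eventually_ge_atTop 0] with y hy
      rw [hm.eq_zero_of_initial_eq_zero (convex_Ici 0) h₁ h₂ self_mem_Ici
        (by simp [h₁0, h₁0', h₂0, h₂0']) h0 h0' hy, zero_mul]
    exact one_ne_zero (tendsto_nhds_unique hlim (tendsto_const_nhds.congr' hzero))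
  obtain ⟨a, b, hab⟩ : ∃ a b : ℂ, ψm 0 * b - ψm' 0 * a = 1 := by
    by_cases h0 : ψm 0 = 0
    · exact ⟨-(ψm' 0)⁻¹, 0, by simp [hne h0]⟩
    · exact ⟨0, (ψm 0)⁻¹, by simp [h0]⟩
  obtain ⟨ψp, ψp', hp, h0, h0', hC⟩ := hivp a b
  refine ⟨ψp, ψp', ψm, ψm', hp, hm, hlim, hC, fun y hy => ?_⟩
  rw [hm.wronskian_eq (convex_Ici 0) hp self_mem_Ici hy, h0, h0', hab]

end Duhamel

section Rayleigh

open MeasureTheory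

/-- The potential `Us'' / (Us - c)` which puts the Rayleigh equation in the Schrödinger form
`ψ'' = (α² + Us'' / (Us - c)) ψ`, with the junk value `0` where `Us y = c`. -/
noncomputable def rayleighPotential (Us : ℝ → ℝ) (c : ℂ) (y : ℝ) : ℂ :=
  ((deriv (deriv Us) y : ℝ) : ℂ) / (Us y - c)

variable {Us : ℝ → ℝ} {c : ℂ} {α : ℝ}

theorem continuousOn_rayleighPotential (hUs : ContDiff ℝ 2 Us) {s : Set ℝ}
    (hc : ∀ y ∈ s, (Us y : ℂ) ≠ c) : ContinuousOn (rayleighPotential Us c) s := by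
  have hderiv : Continuous (deriv (deriv Us)) := by
    simpa only [iteratedDeriv_succ, iteratedDeriv_zero] using hUs.continuous_iteratedDeriv 2 le_rfl
  exact (Complex.continuous_ofReal.comp hderiv).continuousOn.div
    ((Complex.continuous_ofReal.comp hUs.continuous).sub continuous_const).continuousOn
    fun y hy => sub_ne_zero.2 (hc y hy)

theorem IsSchrodingerSolutionOn.isRayleighSolutionOn (hUs : ContDiff ℝ 2 Us) {q ψ ψ' : ℝ → ℂ}
    {I : Set ℝ} (hc : ∀ y ∈ I, (Us y : ℂ) ≠ c) (hq : EqOn q (rayleighPotential Us c) I)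
    (hψ : IsSchrodingerSolutionOn (fun y => (α : ℂ) ^ 2 + q y) ψ ψ' I) :
    IsRayleighSolutionOn Us α c ψ ψ' (fun y => (α ^ 2 + q y) * ψ y) I := by
  refine ⟨fun y => hψ.hasDerivAt, fun y => hψ.hasDerivAt_deriv, ?_, fun y hy => ?_⟩
  · exact (continuousOn_const.add ((continuousOn_rayleighPotential hUs hc).congr hq)).mul
      fun y hy => (hψ.hasDerivAt hy).continuousAt.continuousWithinAt
  · have hcy := sub_ne_zero.2 (hc y hy)
    simp only [hq hy, rayleighPotential]
    field_simp
    ring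

theorem integrableOn_rayleighPotential (hUs : ContDiff ℝ 2 Us) {C η : ℝ} (hη : 0 < η)
    (hdecay : ∀ y ≥ (0 : ℝ), |deriv (deriv Us) y| ≤ C * Real.exp (-η * y)) (hc : c.im ≠ 0) :
    IntegrableOn (rayleighPotential Us c) (Ioi 0) := by
  have hne (y : ℝ) (_ : y ∈ Ioi 0) : (Us y : ℂ) ≠ c := fun h => hc (by simp [← h])
  refine (((exp_neg_integrableOn_Ioi 0 hη).const_mul C).div_const |c.im|).mono'
    ((continuousOn_rayleighPotential hUs hne).aestronglyMeasurable measurableSet_Ioi) ?_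
  refine (ae_restrict_iff' measurableSet_Ioi).2 (.of_forall fun y hy => ?_)
  have him : |c.im| ≤ ‖(Us y : ℂ) - c‖ := by
    simpa using Complex.abs_im_le_norm ((Us y : ℂ) - c)
  have hderiv := hdecay y (le_of_lt hy)
  rw [rayleighPotential, norm_div, Complex.norm_real]
  exact div_le_div₀ ((abs_nonneg _).trans hderiv) hderiv (abs_pos.2 hc) him

theorem rayleigh_global_solutions_half_line_general
    (Us : ℝ → ℝ) (hUs : ContDiff ℝ 2 Us) (α : ℝ) (hα : 0 < α) (c : ℂ)
    (hc : ∀ y ≥ (0 : ℝ), (Us y : ℂ) ≠ c) (hi : IntegrableOn (rayleighPotential Us c) (Ioi 0)) :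
    ∃ ψp ψp' ψp'' ψm ψm' ψm'' : ℝ → ℂ,
      IsRayleighSolutionOn Us α c ψp ψp' ψp'' (Ici 0) ∧
      IsRayleighSolutionOn Us α c ψm ψm' ψm'' (Ici 0) ∧
      Filter.Tendsto (fun y : ℝ => ψm y * Complex.exp ((α * y : ℝ) : ℂ))
        Filter.atTop (nhds 1) ∧
      (∃ C : ℝ, ∀ y ≥ (0 : ℝ), ‖ψp y‖ ≤ C * Real.exp (α * y)) ∧
      ∀ y ≥ (0 : ℝ), ψm y * ψp' y - ψm' y * ψp y = 1 := by
  have hq : Continuous fun y => rayleighPotential Us c |y| :=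
    (continuousOn_rayleighPotential hUs hc).comp_continuous continuous_abs abs_nonneg
  have heq : EqOn (fun y => rayleighPotential Us c |y|) (rayleighPotential Us c) (Ici 0) :=
    fun y hy => congrArg _ (abs_of_nonneg hy)
  obtain ⟨ψp, ψp', ψm, ψm', hp, hm, hlim, hC, hW⟩ :=
    exists_isSchrodingerSolutionOn_wronskian_eq_one hα hq (integrable_comp_abs hi)
  refine ⟨ψp, ψp', _, ψm, ψm', _, hp.isRayleighSolutionOn hUs hc heq,
    hm.isRayleighSolutionOn hUs hc heq, ?_, hC, hW⟩
  simpa only [Complex.ofReal_mul] using hlim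

end Rayleigh

/-- Existence of two solutions `ψ₊`, `ψ₋` of the Rayleigh equation on
`[0, ∞)`, with `ψ₋(y) e^{αy} → 1` at infinity, `|ψ₊(y)| ≤ C e^{αy}`, and unit Wronskian. -/
theorem rayleigh_global_solutions_half_line
    (Us : ℝ → ℝ) (hUs : ContDiff ℝ (⊤ : ℕ∞) Us)
    (Uplus C₀ η : ℝ) (hC₀ : 0 < C₀) (hη : 0 < η)
    (hdecay : ∀ y ≥ (0:ℝ),
      |Us y - Uplus| + |deriv Us y| + |deriv (deriv Us) y| ≤ C₀ * Real.exp (-η * y))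
    (α : ℝ) (hα : 0 < α) (c : ℂ) (hc : c.im ≠ 0) :
    ∃ ψp ψp' ψp'' ψm ψm' ψm'' : ℝ → ℂ,
      IsRayleighSolutionOn Us α c ψp ψp' ψp'' (Ici 0) ∧
      IsRayleighSolutionOn Us α c ψm ψm' ψm'' (Ici 0) ∧
      Filter.Tendsto (fun y : ℝ => ψm y * Complex.exp ((α * y : ℝ) : ℂ))
        Filter.atTop (nhds 1) ∧
      (∃ C : ℝ, ∀ y ≥ (0:ℝ), ‖ψp y‖ ≤ C * Real.exp (α * y)) ∧
      ∀ y ≥ (0:ℝ), ψm y * ψp' y - ψm' y * ψp y = 1 :=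
  rayleigh_global_solutions_half_line_general Us (contDiff_infty.1 hUs 2) α hα c
    (fun y _ h => hc (by simp [← h]))
    (integrableOn_rayleighPotential (contDiff_infty.1 hUs 2) hη
      (fun y hy => (le_add_of_nonneg_left (by positivity)).trans (hdecay y hy)) hc)
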